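/- Let l be a prime and let A be an abelian group which is l-primary torsion (every element is annihilated by some power of l) and whose l-torsion subgroup A[l] is finite. Then the quotient A/Div(A) of A by its maximal divisible subgroup is a finite group, and it is isomorphic to the l-adic completion of A, i.e., A/Div(A) ≅ lim_n A/l^nA. -/

import Mathlib

/-!
The subgroups `lⁿA` decrease, so an element of the finite group `A[l]` that lies in `l^N A` for a
large enough `N` lies in all of them. By induction on the power of `l` killing an element, every
element of `l^N A` is then `l` times another. So `l^N A` is divisible, since a prime factor of an
integer either divides `l` or acts invertibly on `l`-power torsion. A divisible subgroup is
contained in every `mA` with `m ≠ 0`, so `Div(A) = l^N A = ⋂ lⁿA`.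

Since multiplication by `l^N` maps `l^N A` onto itself, `A = A[l^N] + l^N A`, so `A / l^N A` is
finite. It is also the limit of the inverse system `A / lⁿA`, which is constant from `N` on.
-/

/-- A subgroup `D` of an abelian group `A` is divisible if every element of `D` is an
`n`-th multiple of an element of `D`, for every positive integer `n`. -/
def IsDivisibleSubgroup {A : Type*} [AddCommGroup A] (D : AddSubgroup A) : Prop :=
  ∀ d ∈ D, ∀ n : ℕ, 0 < n → ∃ d' ∈ D, n • d' = d

/-- The maximal divisible subgroup of an abelian group: the supremum of all divisible
subgroups. -/
def maxDivisibleSubgroup (A : Type*) [AddCommGroup A] : AddSubgroup A :=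
  sSup {D : AddSubgroup A | IsDivisibleSubgroup D}

/-- The `m`-torsion subgroup `A[m] = {x ∈ A : m • x = 0}` of an abelian group `A`. -/
def torsionBySubgroup (A : Type*) [AddCommGroup A] (m : ℕ) : AddSubgroup A where
  carrier := {x | m • x = 0}
  zero_mem' := smul_zero m
  add_mem' := by
    intro a b ha hb
    simp only [Set.mem_setOf_eq] at *
    rw [smul_add, ha, hb, add_zero]
  neg_mem' := by
    intro a ha
    simp only [Set.mem_setOf_eq] at *
    rw [smul_neg, ha, neg_zero]

/-- The subgroup `m·A` of `m`-th multiples of an abelian group `A`. -/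
def multiplesSubgroup (A : Type*) [AddCommGroup A] (m : ℕ) : AddSubgroup A where
  carrier := {x | ∃ y : A, m • y = x}
  zero_mem' := ⟨0, smul_zero m⟩
  add_mem' := by
    rintro a b ⟨y, rfl⟩ ⟨z, rfl⟩
    exact ⟨y + z, smul_add m y z⟩
  neg_mem' := by
    rintro a ⟨y, rfl⟩
    exact ⟨-y, smul_neg m y⟩

/-- The natural projection `A/l^(n+1)A → A/l^nA`. -/
def adicTransition (A : Type*) [AddCommGroup A] (l n : ℕ) :
    (A ⧸ multiplesSubgroup A (l ^ (n + 1))) →+ (A ⧸ multiplesSubgroup A (l ^ n)) :=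
  QuotientAddGroup.map _ _ (AddMonoidHom.id A) (by
    rintro x ⟨y, rfl⟩
    exact ⟨l • y, by rw [← smul_assoc, smul_eq_mul, ← pow_succ]; rfl⟩)

/-- The `l`-adic completion `lim_n A/l^nA`, realized as the subgroup of compatible
families in `∏ n, A/l^nA`. -/
def adicCompletion (A : Type*) [AddCommGroup A] (l : ℕ) :
    AddSubgroup (∀ n : ℕ, A ⧸ multiplesSubgroup A (l ^ n)) where
  carrier := {f | ∀ n : ℕ, adicTransition A l n (f (n + 1)) = f n}
  zero_mem' := by intro n; simp
  add_mem' := by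
    intro a b ha hb n
    simp only [Pi.add_apply, map_add, ha n, hb n]
  neg_mem' := by
    intro a ha n
    simp only [Pi.neg_apply, map_neg, ha n]

theorem exists_forall_mem_of_antitone {ι α : Type*} [Preorder ι] [IsDirectedOrder ι] [Nonempty ι]
    {s : ι → Set α} (hs : Antitone s) {t : Set α} (ht : t.Finite) :
    ∃ i, ∀ x ∈ t, x ∈ s i → ∀ j, x ∈ s j := by
  refine ((Filter.eventually_all_finite ht (l := Filter.atTop)).2 fun x _ => ?_).exists
  by_cases hx : ∀ j, x ∈ s j
  · exact .of_forall fun _ _ => hx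
  · obtain ⟨j, hj⟩ := not_forall.1 hx
    filter_upwards [Filter.eventually_ge_atTop j] with i hji hi
    exact absurd (hs hji hi) hj

section DivisibleSubgroup

variable {A : Type*} [AddCommGroup A] {D : AddSubgroup A} {l m n : ℕ}

theorem multiplesSubgroup_le_of_dvd (h : m ∣ n) :
    multiplesSubgroup A n ≤ multiplesSubgroup A m := by
  obtain ⟨k, rfl⟩ := h
  rintro _ ⟨y, rfl⟩
  exact ⟨k • y, (mul_nsmul' y m k).symm⟩

theorem IsDivisibleSubgroup.le_multiplesSubgroup (hD : IsDivisibleSubgroup D) (hm : m ≠ 0) :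
    D ≤ multiplesSubgroup A m := fun x hx =>
  let ⟨y, _, hy⟩ := hD x hx m (Nat.pos_of_ne_zero hm)
  ⟨y, hy⟩

theorem maxDivisibleSubgroup_le_multiplesSubgroup (hm : m ≠ 0) :
    maxDivisibleSubgroup A ≤ multiplesSubgroup A m :=
  sSup_le fun _ hD => IsDivisibleSubgroup.le_multiplesSubgroup hD hm

theorem maxDivisibleSubgroup_eq_multiplesSubgroup (hm : m ≠ 0)
    (h : IsDivisibleSubgroup (multiplesSubgroup A m)) :
    maxDivisibleSubgroup A = multiplesSubgroup A m :=
  (maxDivisibleSubgroup_le_multiplesSubgroup hm).antisymm (le_sSup h)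

theorem isDivisibleSubgroup_of_pow_torsion (htors : ∀ x ∈ D, ∃ k : ℕ, l ^ k • x = 0)
    (hdiv : ∀ x ∈ D, ∃ y ∈ D, l • y = x) : IsDivisibleSubgroup D := by
  have prime_divisible (p : ℕ) (hp : p.Prime) (x : A) (hx : x ∈ D) : ∃ y ∈ D, p • y = x := by
    rcases Nat.coprime_or_dvd_of_prime hp l with hpl | ⟨c, rfl⟩
    · obtain ⟨k, hk⟩ := htors x hx
      have hcop : p.Coprime (addOrderOf x) :=
        (hpl.pow_right k).coprime_dvd_right (addOrderOf_dvd_of_nsmul_eq_zero hk)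
      obtain ⟨u, hu⟩ := exists_nsmul_eq_self_of_coprime hcop
      exact ⟨u • x, nsmul_mem hx u, by rw [nsmul_left_comm, hu]⟩
    · obtain ⟨y, hy, rfl⟩ := hdiv x hx
      exact ⟨c • y, nsmul_mem hy c, (mul_nsmul' y p c).symm⟩
  intro x hx n hn
  induction n using induction_on_primes generalizing x with
  | zero => exact absurd hn (lt_irrefl 0)
  | one => exact ⟨x, hx, one_nsmul x⟩
  | prime_mul p n hp ih =>
    obtain ⟨y, hy, rfl⟩ := prime_divisible p hp x hx
    obtain ⟨z, hz, rfl⟩ := ih y hy (Nat.pos_of_mul_pos_left hn)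
    exact ⟨z, hz, mul_nsmul' z p n⟩

theorem exists_nsmul_eq_of_torsion_infinite_height (htors : ∀ x ∈ D, ∃ k : ℕ, l ^ k • x = 0)
    (hheight : ∀ x ∈ D, l • x = 0 → ∀ n : ℕ, ∃ y ∈ D, l ^ n • y = x) :
    ∀ x ∈ D, ∃ y ∈ D, l • y = x := by
  suffices ∀ (k : ℕ), ∀ x ∈ D, l ^ k • x = 0 → ∃ y ∈ D, l • y = x from fun x hx =>
    let ⟨k, hk⟩ := htors x hx
    this k x hx hk
  intro k
  induction k with
  | zero => exact fun x _ hx => ⟨0, zero_mem D, by simpa using hx.symm⟩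
  | succ k ih =>
    intro x hx hkx
    -- `l ^ k • x` is `l`-torsion, so it equals `l ^ (k + 1) • z`; then `l ^ k` kills `x - l • z`.
    obtain ⟨z, hz, hzx⟩ := hheight (l ^ k • x) (nsmul_mem hx _)
      (by rwa [← mul_nsmul', ← pow_succ']) (k + 1)
    have hsub : l ^ k • (x - l • z) = 0 := by
      rw [nsmul_sub, ← mul_nsmul', ← pow_succ, hzx, sub_self]
    obtain ⟨y, hy, hyx⟩ := ih (x - l • z) (sub_mem hx (nsmul_mem hz l)) hsub
    exact ⟨y + z, add_mem hy hz, by rw [nsmul_add, hyx, sub_add_cancel]⟩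

theorem exists_isDivisibleSubgroup_multiplesSubgroup_pow
    (htors : ∀ x : A, ∃ k : ℕ, l ^ k • x = 0) (hfin : Finite (torsionBySubgroup A l)) :
    ∃ N : ℕ, IsDivisibleSubgroup (multiplesSubgroup A (l ^ N)) := by
  have hanti : Antitone fun n => (multiplesSubgroup A (l ^ n) : Set A) :=
    fun _ _ h => multiplesSubgroup_le_of_dvd (pow_dvd_pow l h)
  obtain ⟨N, hN⟩ :=
    exists_forall_mem_of_antitone hanti (Set.toFinite (torsionBySubgroup A l : Set A))
  refine ⟨N, isDivisibleSubgroup_of_pow_torsion (fun x _ => htors x) <|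
    exists_nsmul_eq_of_torsion_infinite_height (fun x _ => htors x) fun x hx hlx n => ?_⟩
  obtain ⟨y, hy⟩ := hN x hlx hx (n + N)
  exact ⟨l ^ N • y, ⟨y, rfl⟩, by rw [← mul_nsmul', ← pow_add, hy]⟩

end DivisibleSubgroup

section FiniteTorsion

variable {A : Type*} [AddCommGroup A] {l m n : ℕ}

theorem finite_torsionBySubgroup_mul (hm : Finite (torsionBySubgroup A m))
    (hn : Finite (torsionBySubgroup A n)) : Finite (torsionBySubgroup A (m * n)) := by
  let f : torsionBySubgroup A (m * n) →+ A :=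
    (nsmulAddMonoidHom n).comp (torsionBySubgroup A (m * n)).subtype
  have hker : Finite f.ker :=
    Finite.of_injective (fun x => (⟨x.1, x.2⟩ : torsionBySubgroup A n)) fun _ _ hxy =>
      Subtype.ext (Subtype.ext (Subtype.mk.inj hxy))
  have hrange : Finite f.range := by
    refine (Set.toFinite (torsionBySubgroup A m : Set A)).subset ?_
    rintro _ ⟨⟨x, hx⟩, rfl⟩
    exact (mul_nsmul' x m n).symm.trans hx
  exact f.finite_iff_finite_ker_range.2 ⟨hker, hrange⟩

theorem finite_torsionBySubgroup_pow (hl : Finite (torsionBySubgroup A l)) (n : ℕ) :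
    Finite (torsionBySubgroup A (l ^ n)) := by
  induction n with
  | zero =>
    refine Set.Finite.subset (Set.finite_singleton (0 : A)) fun x hx => ?_
    exact (one_nsmul x).symm.trans hx
  | succ n ih => exact pow_succ l n ▸ finite_torsionBySubgroup_mul ih hl

theorem finite_quotient_multiplesSubgroup
    (hm : multiplesSubgroup A m ≤ multiplesSubgroup A (m * m))
    (hfin : Finite (torsionBySubgroup A m)) :
    Finite (A ⧸ multiplesSubgroup A m) := by
  refine Finite.of_surjective
    ((QuotientAddGroup.mk' (multiplesSubgroup A m)).comp (torsionBySubgroup A m).subtype) ?_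
  intro q
  obtain ⟨a, rfl⟩ := QuotientAddGroup.mk_surjective q
  obtain ⟨b, hb⟩ := hm ⟨a, rfl⟩
  have htors : m • (a - m • b) = 0 := by rw [nsmul_sub, ← mul_nsmul', hb, sub_self]
  have hmb : m • b = -(a - m • b) + a := by abel
  exact ⟨⟨a - m • b, htors⟩, QuotientAddGroup.eq.2 ⟨b, hmb⟩⟩

end FiniteTorsion

section AdicCompletion

variable {A : Type*} [AddCommGroup A] {l : ℕ}

/-- The natural map `A → lim_n A/lⁿA`, which induces the isomorphism on `A/Div(A)`. -/
def toAdicCompletion (A : Type*) [AddCommGroup A] (l : ℕ) : A →+ adicCompletion A l where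
  toFun a := ⟨fun _ => a, fun _ => rfl⟩
  map_zero' := rfl
  map_add' _ _ := rfl

theorem ker_toAdicCompletion :
    (toAdicCompletion A l).ker = ⨅ n : ℕ, multiplesSubgroup A (l ^ n) := by
  ext a
  rw [AddMonoidHom.mem_ker, AddSubgroup.mem_iInf, Subtype.ext_iff, funext_iff]
  exact forall_congr' fun n => QuotientAddGroup.eq_zero_iff a

theorem mk_eq_adicCompletion_apply_of_le (f : adicCompletion A l) {m n : ℕ} (hmn : m ≤ n) {a : A}
    (ha : (a : A ⧸ multiplesSubgroup A (l ^ n)) = f.1 n) :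
    (a : A ⧸ multiplesSubgroup A (l ^ m)) = f.1 m := by
  induction n, hmn using Nat.le_induction with
  | base => exact ha
  | succ n _ ih => exact ih ((congrArg (adicTransition A l n) ha).trans (f.2 n))

theorem toAdicCompletion_surjective {N : ℕ}
    (hN : ∀ n : ℕ, multiplesSubgroup A (l ^ N) ≤ multiplesSubgroup A (l ^ n)) :
    Function.Surjective (toAdicCompletion A l) := by
  intro f
  obtain ⟨a, ha⟩ := QuotientAddGroup.mk_surjective (f.1 N)
  refine ⟨a, Subtype.ext (funext fun n => ?_)⟩
  obtain ⟨b, hb⟩ := QuotientAddGroup.mk_surjective (f.1 (max n N))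
  have hab : (a : A ⧸ multiplesSubgroup A (l ^ N)) = b :=
    ha.trans (mk_eq_adicCompletion_apply_of_le f (le_max_right n N) hb).symm
  calc (a : A ⧸ multiplesSubgroup A (l ^ n)) = b :=
        QuotientAddGroup.eq.2 (hN n (QuotientAddGroup.eq.1 hab))
    _ = f.1 n := mk_eq_adicCompletion_apply_of_le f (le_max_left n N) hb

theorem nonempty_quotient_maxDivisibleSubgroup_addEquiv_adicCompletion {N : ℕ} (hl : l ≠ 0)
    (hN : IsDivisibleSubgroup (multiplesSubgroup A (l ^ N))) :
    Nonempty ((A ⧸ maxDivisibleSubgroup A) ≃+ adicCompletion A l) := by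
  have hker : maxDivisibleSubgroup A = (toAdicCompletion A l).ker := by
    rw [ker_toAdicCompletion]
    refine le_antisymm
      (le_iInf fun n => maxDivisibleSubgroup_le_multiplesSubgroup (pow_ne_zero n hl)) ?_
    exact (iInf_le _ N).trans (le_sSup hN)
  have hsurj : Function.Surjective (toAdicCompletion A l) :=
    toAdicCompletion_surjective fun n => hN.le_multiplesSubgroup (pow_ne_zero n hl)
  exact ⟨(QuotientAddGroup.quotientAddEquivOfEq hker).trans
    (QuotientAddGroup.quotientKerEquivOfSurjective _ hsurj)⟩

end AdicCompletion

theorem quotient_maxDivisible_finite_and_iso_adicCompletion_general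
    (l : ℕ) (hl : l ≠ 0) (A : Type*) [AddCommGroup A]
    (hprim : ∀ x : A, ∃ n : ℕ, l ^ n • x = 0)
    (hfin : Finite (torsionBySubgroup A l)) :
    Finite (A ⧸ maxDivisibleSubgroup A) ∧
      Nonempty ((A ⧸ maxDivisibleSubgroup A) ≃+ adicCompletion A l) := by
  obtain ⟨N, hN⟩ := exists_isDivisibleSubgroup_multiplesSubgroup_pow hprim hfin
  have hlN : l ^ N ≠ 0 := pow_ne_zero N hl
  refine ⟨?_, nonempty_quotient_maxDivisibleSubgroup_addEquiv_adicCompletion hl hN⟩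
  rw [maxDivisibleSubgroup_eq_multiplesSubgroup hlN hN]
  exact finite_quotient_multiplesSubgroup (hN.le_multiplesSubgroup (mul_ne_zero hlN hlN))
    (finite_torsionBySubgroup_pow hfin N)

/-- Let `l` be a prime and `A` an abelian group which is `l`-primary torsion and whose
`l`-torsion subgroup `A[l]` is finite. Then `A/Div(A)` is finite and is isomorphic to the
`l`-adic completion `lim_n A/l^nA` of `A`. -/
theorem quotient_maxDivisible_finite_and_iso_adicCompletion
    (l : ℕ) (hl : l.Prime) (A : Type*) [AddCommGroup A]
    (hprim : ∀ x : A, ∃ n : ℕ, l ^ n • x = 0)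
    (hfin : Finite (torsionBySubgroup A l)) :
    Finite (A ⧸ maxDivisibleSubgroup A) ∧
      Nonempty ((A ⧸ maxDivisibleSubgroup A) ≃+ adicCompletion A l) :=
  quotient_maxDivisible_finite_and_iso_adicCompletion_general l hl.ne_zero A hprim hfin
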